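/- Let h ≥ 1 and let s_1, …, s_h be real numbers with s_i > 1 for all i. For weakly decreasing (m_1, …, m_h) ∈ (ℕ+)^h, let n^e_{[m_1,…,m_h]} denote the number of espaliers of height h with multivolume (m_1, …, m_h). Then Σ_{m_1 ≥ … ≥ m_h ≥ 1} n^e_{[m_1,…,m_h]} / (m_1^{s_1} ⋯ m_h^{s_h}) = Z(s_1, …, s_h)^2, where Z(s_1, …, s_h) = Σ_{n_1 ≥ … ≥ n_h ≥ 1} 1/(n_1^{s_1} ⋯ n_h^{s_h}) is the large multizeta function, all series converging. -/

import Mathlib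

/-!
Every slice of an espalier is a rectangle `[0, u) × [0, v)`: it lies in the first quadrant, because
the bottom slice does and the slices decrease, and it contains the origin. The slices being nested,
the side lengths at the successive levels form two weakly decreasing tuples `u` and `v`, and any
such pair arises from exactly one espalier, of multivolume `(u_i v_i)_i`. Hence the number of
espaliers of multivolume `m` is the number of factorizations `m = u v` (`card_espaliers`).

The general term of `Z` is multiplicative under pointwise products (`zterm_mul`), so grouping the
absolutely convergent double series `Z ^ 2` by the product `u v` gives the Dirichlet series of the
espalier numbers (`hasSum_fiber`). Convergence of `Z` follows by comparison with the unrestricted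
series, a product of one-variable zeta series (`summable_zterm_all`).
-/

/-- The `a`-th horizontal slice of a finite set of cells in `ℕ × ℤ × ℤ`. -/
def polySlice (P : Finset (ℕ × ℤ × ℤ)) (a : ℕ) : Finset (ℤ × ℤ) :=
  (P.filter fun q => q.1 = a).image fun q => q.2

/-- A plateau: the product of two nonempty finite integer intervals. -/
def IsPlateau (S : Finset (ℤ × ℤ)) : Prop :=
  ∃ a b c d : ℤ, a ≤ b ∧ c ≤ d ∧ S = Finset.Icc a b ×ˢ Finset.Icc c d

/-- A pyramid of height `h`. -/
def IsPyramid (h : ℕ) (P : Finset (ℕ × ℤ × ℤ)) : Prop :=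
  (∀ a : ℕ, (polySlice P a).Nonempty ↔ a < h) ∧
  (∀ a : ℕ, a < h → IsPlateau (polySlice P a)) ∧
  (∀ (a : ℕ) (b c : ℤ), (a + 1, b, c) ∈ P → (a, b, c) ∈ P) ∧
  (∀ b c : ℤ, ((0 : ℕ), b, c) ∈ P → 0 ≤ b ∧ 0 ≤ c) ∧
  ((0 : ℕ), (0 : ℤ), (0 : ℤ)) ∈ P

/-- An espalier of height `h`: a pyramid all of whose plateaus contain `(0,0)`. -/
def IsEspalier (h : ℕ) (P : Finset (ℕ × ℤ × ℤ)) : Prop :=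
  IsPyramid h P ∧ ∀ a : ℕ, a < h → (a, (0 : ℤ), (0 : ℤ)) ∈ P

/-- Weakly decreasing `h`-tuples of positive integers. -/
abbrev DecTuple (h : ℕ) : Type := {n : Fin h → ℕ+ // Antitone n}

/-- The general term `1 / (n_1 ^ s_1 ⋯ n_h ^ s_h)` of the large multizeta function. -/
noncomputable def zterm {h : ℕ} (s : Fin h → ℝ) (n : Fin h → ℕ+) : ℝ :=
  1 / ∏ i : Fin h, ((n i : ℕ) : ℝ) ^ (s i)

/-- Pointwise product of decreasing tuples. -/
def DecTuple.mul {h : ℕ} (p : DecTuple h × DecTuple h) : DecTuple h :=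
  ⟨fun i => p.1.1 i * p.2.1 i, fun _ _ hij => mul_le_mul' (p.1.2 hij) (p.2.2 hij)⟩

lemma zterm_nonneg {h : ℕ} (s : Fin h → ℝ) (n : Fin h → ℕ+) : 0 ≤ zterm s n := by
  unfold zterm; positivity

lemma zterm_mul {h : ℕ} (s : Fin h → ℝ) (p : DecTuple h × DecTuple h) :
    zterm s (DecTuple.mul p).1 = zterm s p.1.1 * zterm s p.2.1 := by
  unfold zterm DecTuple.mul
  rw [one_div_mul_one_div, ← Finset.prod_mul_distrib]
  congr 1
  refine Finset.prod_congr rfl fun i _ => ?_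
  rw [PNat.mul_coe, Nat.cast_mul, Real.mul_rpow (by positivity) (by positivity)]

/-- Without the monotonicity constraint the series is a product of `h` convergent one-variable
zeta series. -/
lemma summable_zterm_all {h : ℕ} (s : Fin h → ℝ) (hs : ∀ i, 1 < s i) :
    Summable fun n : Fin h → ℕ+ => zterm s n := by
  induction h with
  | zero => exact Summable.of_finite
  | succ k ih =>
    have h1 : Summable fun n : ℕ+ => 1 / ((n : ℕ) : ℝ) ^ (s 0) :=
      (Real.summable_one_div_nat_rpow.2 (hs 0)).comp_injective PNat.coe_injective
    have h2 := ih (fun i => s i.succ) fun i => hs _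
    have h3 := h1.mul_of_nonneg h2 (fun n => by positivity) fun n => zterm_nonneg _ n
    rw [← (Fin.consEquiv fun _ : Fin (k + 1) => ℕ+).summable_iff]
    refine h3.congr fun p => ?_
    simp [zterm, Fin.prod_univ_succ, Fin.consEquiv, mul_comm]

lemma summable_zterm {h : ℕ} (s : Fin h → ℝ) (hs : ∀ i, 1 < s i) :
    Summable fun n : DecTuple h => zterm s n.1 :=
  (summable_zterm_all s hs).comp_injective Subtype.val_injective

/-- Grouping the double series for `Z ^ 2` according to the pointwise product of the two tuples. -/
lemma hasSum_fiber {h : ℕ} (s : Fin h → ℝ) (hs : ∀ i, 1 < s i) :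
    HasSum (fun m : DecTuple h =>
        (Nat.card {p : DecTuple h × DecTuple h // DecTuple.mul p = m} : ℝ) * zterm s m.1)
      ((∑' n : DecTuple h, zterm s n.1) ^ 2) := by
  have hz := summable_zterm s hs
  have hsum : Summable fun p : DecTuple h × DecTuple h => zterm s p.1.1 * zterm s p.2.1 :=
    hz.mul_of_nonneg hz (fun n => zterm_nonneg _ _) fun n => zterm_nonneg _ _
  have hF : HasSum (fun p : DecTuple h × DecTuple h => zterm s (DecTuple.mul p).1)
      ((∑' n : DecTuple h, zterm s n.1) ^ 2) := by
    simp only [zterm_mul]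
    rw [pow_two, hz.tsum_mul_tsum hz hsum]
    exact hsum.hasSum
  rw [← (Equiv.sigmaFiberEquiv (DecTuple.mul (h := h))).hasSum_iff] at hF
  refine hF.sigma fun m => ?_
  have hm := (hF.summable.sigma_factor m).hasSum
  have hc : ∀ p : {p : DecTuple h × DecTuple h // DecTuple.mul p = m},
      ((fun p : DecTuple h × DecTuple h => zterm s (DecTuple.mul p).1) ∘
        Equiv.sigmaFiberEquiv (DecTuple.mul (h := h))) ⟨m, p⟩ = zterm s m.1 := by
    rintro ⟨p, rfl⟩; rfl
  -- The fibre sum is a constant sum, so it equals the cardinality times the constant.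
  rwa [tsum_congr hc, tsum_const, nsmul_eq_mul] at hm

/-- The espalier whose slice at level `i` is `[0, u i) × [0, v i)`. -/
noncomputable def mkEspalier {h : ℕ} (u v : Fin h → ℕ+) : Finset (ℕ × ℤ × ℤ) :=
  Finset.univ.biUnion fun i : Fin h =>
    {(i : ℕ)} ×ˢ (Finset.Icc (0 : ℤ) ((u i : ℕ) - 1 : ℤ) ×ˢ Finset.Icc (0 : ℤ) ((v i : ℕ) - 1 : ℤ))

lemma mem_polySlice {P : Finset (ℕ × ℤ × ℤ)} {a : ℕ} {x : ℤ × ℤ} :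
    x ∈ polySlice P a ↔ (a, x) ∈ P := by
  simp [polySlice]

lemma mem_mkEspalier {h : ℕ} {u v : Fin h → ℕ+} {i : Fin h} {b c : ℤ} :
    ((i : ℕ), b, c) ∈ mkEspalier u v ↔
      (0 ≤ b ∧ b ≤ (u i : ℕ) - 1) ∧ (0 ≤ c ∧ c ≤ (v i : ℕ) - 1) := by
  simp only [mkEspalier, Finset.mem_biUnion, Finset.mem_univ, true_and, Finset.mem_product,
    Finset.mem_singleton, Finset.mem_Icc]
  constructor
  · rintro ⟨j, hj, hx⟩
    rwa [Fin.ext hj]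
  · exact fun hx => ⟨i, rfl, hx⟩

lemma lt_of_mem_mkEspalier {h : ℕ} {u v : Fin h → ℕ+} {a : ℕ} {x : ℤ × ℤ}
    (hx : (a, x) ∈ mkEspalier u v) : a < h := by
  simp only [mkEspalier, Finset.mem_biUnion, Finset.mem_product, Finset.mem_singleton] at hx
  obtain ⟨i, -, hi, -⟩ := hx
  exact hi ▸ i.2

lemma polySlice_mkEspalier {h : ℕ} (u v : Fin h → ℕ+) (i : Fin h) :
    polySlice (mkEspalier u v) i =
      Finset.Icc (0 : ℤ) ((u i : ℕ) - 1 : ℤ) ×ˢ Finset.Icc (0 : ℤ) ((v i : ℕ) - 1 : ℤ) := by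
  ext ⟨b, c⟩
  rw [mem_polySlice, mem_mkEspalier]
  simp

lemma card_polySlice_mkEspalier {h : ℕ} (u v : Fin h → ℕ+) (i : Fin h) :
    (polySlice (mkEspalier u v) i).card = (u i : ℕ) * v i := by
  simp [polySlice_mkEspalier]

lemma isEspalier_mkEspalier {h : ℕ} (hh : 1 ≤ h) {u v : Fin h → ℕ+}
    (hu : Antitone u) (hv : Antitone v) : IsEspalier h (mkEspalier u v) := by
  have h0 : ∀ a : ℕ, a < h → (a, (0 : ℤ), (0 : ℤ)) ∈ mkEspalier u v := fun a ha => by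
    have h1 := (u ⟨a, ha⟩).pos
    have h2 := (v ⟨a, ha⟩).pos
    exact (mem_mkEspalier (i := ⟨a, ha⟩)).2 (by omega)
  refine ⟨⟨fun a => ⟨?_, fun ha => ⟨(0, 0), mem_polySlice.2 (h0 a ha)⟩⟩, fun a ha => ?_, ?_, ?_,
    h0 0 hh⟩, h0⟩
  · rintro ⟨x, hx⟩
    exact lt_of_mem_mkEspalier (mem_polySlice.1 hx)
  · have h1 := (u ⟨a, ha⟩).pos
    have h2 := (v ⟨a, ha⟩).pos
    exact ⟨0, _, 0, _, by omega, by omega, polySlice_mkEspalier u v ⟨a, ha⟩⟩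
  · intro a b c hx
    have ha := lt_of_mem_mkEspalier hx
    have hx' := (mem_mkEspalier (i := ⟨a + 1, ha⟩)).1 hx
    have hle : (⟨a, by omega⟩ : Fin h) ≤ ⟨a + 1, ha⟩ := Fin.mk_le_mk.2 (Nat.le_succ a)
    have h1 : (u ⟨a + 1, ha⟩ : ℕ) ≤ u ⟨a, by omega⟩ := hu hle
    have h2 : (v ⟨a + 1, ha⟩ : ℕ) ≤ v ⟨a, by omega⟩ := hv hle
    exact (mem_mkEspalier (i := ⟨a, by omega⟩)).2 (by omega)
  · intro b c hx
    have hx' := (mem_mkEspalier (i := ⟨0, hh⟩)).1 hx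
    omega

/-- Each slice of an espalier lies in the first quadrant and contains the origin, so it is a
rectangle anchored at the origin. -/
lemma IsEspalier.exists_slice {h : ℕ} {P : Finset (ℕ × ℤ × ℤ)} (hP : IsEspalier h P)
    (i : Fin h) : ∃ p : ℕ+ × ℕ+, ∀ b c : ℤ, ((i : ℕ), b, c) ∈ P ↔
      (0 ≤ b ∧ b ≤ (p.1 : ℕ) - 1) ∧ (0 ≤ c ∧ c ≤ (p.2 : ℕ) - 1) := by
  obtain ⟨⟨-, hplat, hdown, hquad, -⟩, h0⟩ := hP
  have hpos : ∀ (a : ℕ) (b c : ℤ), (a, b, c) ∈ P → 0 ≤ b ∧ 0 ≤ c := by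
    intro a
    induction a with
    | zero => exact hquad
    | succ a ih => exact fun b c hx => ih b c (hdown a b c hx)
  obtain ⟨a, b, c, d, hab, hcd, hS⟩ := hplat i i.2
  have hmem : ∀ x y : ℤ, ((i : ℕ), x, y) ∈ P ↔ (a ≤ x ∧ x ≤ b) ∧ (c ≤ y ∧ y ≤ d) := by
    intro x y
    rw [← mem_polySlice, hS]
    simp
  have h1 := (hmem 0 0).1 (h0 i i.2)
  have h2 := hpos _ _ _ ((hmem a c).2 ⟨⟨le_rfl, hab⟩, le_rfl, hcd⟩)
  refine ⟨(⟨b.toNat + 1, by omega⟩, ⟨d.toNat + 1, by omega⟩), fun x y => ?_⟩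
  rw [hmem]
  simp only [PNat.mk_coe]
  omega

lemma IsEspalier.exists_eq_mk {h : ℕ} {P : Finset (ℕ × ℤ × ℤ)} (hP : IsEspalier h P) :
    ∃ u v : DecTuple h, mkEspalier u.1 v.1 = P := by
  choose p hp using hP.exists_slice
  have hdown : ∀ (k a : ℕ) (b c : ℤ), (a + k, b, c) ∈ P → (a, b, c) ∈ P := by
    intro k
    induction k with
    | zero => exact fun a b c hx => hx
    | succ k ih => exact fun a b c hx => ih a b c (hP.1.2.2.1 _ b c hx)
  have hanti : ∀ i j : Fin h, i ≤ j → p j ≤ p i := by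
    intro i j hij
    have h1 := (p j).1.pos
    have h2 := (p j).2.pos
    -- The corner of the upper rectangle opposite to the origin also lies in the lower one.
    have hx := (hp j ((p j).1 - 1) ((p j).2 - 1)).2 (by omega)
    have hij' : (i : ℕ) ≤ j := hij
    have hy := (hp i _ _).1 (hdown (j - i) i _ _ (by rwa [Nat.add_sub_cancel' hij']))
    exact ⟨by rw [← PNat.coe_le_coe]; omega, by rw [← PNat.coe_le_coe]; omega⟩
  refine ⟨⟨fun i => (p i).1, fun i j hij => (hanti i j hij).1⟩,
    ⟨fun i => (p i).2, fun i j hij => (hanti i j hij).2⟩, ?_⟩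
  ext ⟨a, b, c⟩
  by_cases ha : a < h
  · exact (mem_mkEspalier (i := ⟨a, ha⟩)).trans (hp ⟨a, ha⟩ b c).symm
  · refine ⟨fun hx => absurd (lt_of_mem_mkEspalier hx) ha, fun hx => absurd ?_ ha⟩
    exact (hP.1.1 a).1 ⟨_, mem_polySlice.2 hx⟩

lemma mkEspalier_injective {h : ℕ} {u v u' v' : Fin h → ℕ+}
    (heq : mkEspalier u v = mkEspalier u' v') : u = u' ∧ v = v' := by
  have key : ∀ i, u i = u' i ∧ v i = v' i := by
    intro i
    have hx : ∀ b c : ℤ, _ ↔ _ := fun b c =>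
      (mem_mkEspalier (u := u) (v := v) (i := i) (b := b) (c := c)).symm.trans
        ((by rw [heq] : _ ↔ _).trans
          (mem_mkEspalier (u := u') (v := v') (i := i) (b := b) (c := c)))
    have h1 := (u i).pos
    have h2 := (v i).pos
    have h3 := (u' i).pos
    have h4 := (v' i).pos
    have e1 := hx ((u i : ℕ) - 1) ((v i : ℕ) - 1)
    have e2 := hx ((u' i : ℕ) - 1) ((v' i : ℕ) - 1)
    exact ⟨PNat.coe_injective (by omega), PNat.coe_injective (by omega)⟩
  exact ⟨funext fun i => (key i).1, funext fun i => (key i).2⟩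

/-- Espaliers with multivolume `m` are counted by the factorizations of `m` as a pointwise product
of two decreasing tuples. -/
lemma card_espaliers {h : ℕ} (hh : 1 ≤ h) (m : DecTuple h) :
    Nat.card {P : Finset (ℕ × ℤ × ℤ) //
        IsEspalier h P ∧ ∀ i : Fin h, (polySlice P (i : ℕ)).card = (m.1 i : ℕ)} =
      Nat.card {p : DecTuple h × DecTuple h // DecTuple.mul p = m} := by
  symm
  refine Nat.card_congr (Equiv.ofBijective (fun p => ⟨mkEspalier p.1.1.1 p.1.2.1,
    isEspalier_mkEspalier hh p.1.1.2 p.1.2.2, fun i => ?_⟩) ⟨?_, ?_⟩)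
  · obtain ⟨p, rfl⟩ := p
    exact card_polySlice_mkEspalier _ _ i
  · rintro ⟨⟨u, v⟩, hp⟩ ⟨⟨u', v'⟩, hp'⟩ heq
    obtain ⟨h1, h2⟩ := mkEspalier_injective (congrArg Subtype.val heq)
    exact Subtype.ext (Prod.ext (Subtype.ext h1) (Subtype.ext h2))
  · rintro ⟨P, hP, hc⟩
    obtain ⟨u, v, rfl⟩ := hP.exists_eq_mk
    refine ⟨⟨(u, v), Subtype.ext (funext fun i => PNat.coe_injective ?_)⟩, rfl⟩
    rw [← hc i, card_polySlice_mkEspalier]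
    rfl

theorem dirichlet_genfun_espaliers (h : ℕ) (hh : 1 ≤ h) (s : Fin h → ℝ)
    (hs : ∀ i, 1 < s i) :
    (Summable fun m : {m : Fin h → ℕ+ // Antitone m} =>
      (Nat.card {P : Finset (ℕ × ℤ × ℤ) //
          IsEspalier h P ∧ ∀ i : Fin h, (polySlice P (i : ℕ)).card = (m.1 i : ℕ)} : ℝ) /
        ∏ i : Fin h, ((m.1 i : ℕ) : ℝ) ^ (s i)) ∧
    (Summable fun n : {n : Fin h → ℕ+ // Antitone n} =>
      1 / ∏ i : Fin h, ((n.1 i : ℕ) : ℝ) ^ (s i)) ∧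
    (∑' m : {m : Fin h → ℕ+ // Antitone m},
        (Nat.card {P : Finset (ℕ × ℤ × ℤ) //
            IsEspalier h P ∧ ∀ i : Fin h, (polySlice P (i : ℕ)).card = (m.1 i : ℕ)} : ℝ) /
          ∏ i : Fin h, ((m.1 i : ℕ) : ℝ) ^ (s i)) =
      (∑' n : {n : Fin h → ℕ+ // Antitone n},
        1 / ∏ i : Fin h, ((n.1 i : ℕ) : ℝ) ^ (s i)) ^ 2 := by
  have H := hasSum_fiber s hs
  have hfun : (fun m : {m : Fin h → ℕ+ // Antitone m} =>
      (Nat.card {P : Finset (ℕ × ℤ × ℤ) //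
          IsEspalier h P ∧ ∀ i : Fin h, (polySlice P (i : ℕ)).card = (m.1 i : ℕ)} : ℝ) /
        ∏ i : Fin h, ((m.1 i : ℕ) : ℝ) ^ (s i)) = fun m : DecTuple h =>
        (Nat.card {p : DecTuple h × DecTuple h // DecTuple.mul p = m} : ℝ) * zterm s m.1 := by
    funext m
    rw [card_espaliers hh m, zterm, mul_one_div]
  rw [hfun]
  exact ⟨H.summable, summable_zterm s hs, H.tsum_eq⟩
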